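/- arXiv:1602.01341 — 2 statements merged into one kernel-verified Lean document; each statement's English description precedes it below -/
import Mathlib

section
/- Let b ≥ 1 be an integer and s₀ > b/2. There exists a constant C(s₀) ≥ 1, and for each s ≥ s₀ a constant C(s) > 0, with the following property. Let Ψ be a matrix on ℤᵇ with C(s₀)|Ψ|_{s₀} ≤ 1/2 and set Φ := Id + Ψ. Then Φ is invertible, i.e. there is a matrix Φ^{-1} with ΦΦ^{-1} = Φ^{-1}Φ = Id (all matrix products defined by absolutely convergent sums), and |Φ^{-1}|_{s₀} ≤ 2 and, for every s ≥ s₀, |Φ^{-1} − Id|_s ≤ C(s)|Ψ|_s whenever |Ψ|_s < ∞. Moreover, if Φ_i = Id + Ψ_i, i = 1, 2, with C(s₀)|Ψ_i|_{s₀} ≤ 1/2, then |Φ₂^{-1} − Φ₁^{-1}|_s ≤ C(s)(|Ψ₂ − Ψ₁|_s + (|Ψ₁|_s + |Ψ₂|_s)|Ψ₂ − Ψ₁|_{s₀}). -/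
open scoped ENNReal

/-- `|i| := max_k |i_k|` for a multi-index `i ∈ ℤᵇ`. -/
def absIdx {b : ℕ} (i : Fin b → ℤ) : ℕ :=
  Finset.univ.sup fun k => (i k).natAbs

/-- `⟨i⟩ := max(1, |i|)`. -/
noncomputable def wt {b : ℕ} (i : Fin b → ℤ) : ℝ := max 1 (absIdx i : ℝ)

/-- Sobolev norm `‖u‖_s := (Σ_i ⟨i⟩^{2s} |u_i|²)^{1/2}` (valued in `ℝ≥0∞`). -/
noncomputable def sobNorm {b : ℕ} (u : (Fin b → ℤ) → ℂ) (s : ℝ) : ℝ≥0∞ :=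
  (∑' i : Fin b → ℤ, ENNReal.ofReal (wt i ^ (2 * s)) * (‖u i‖₊ : ℝ≥0∞) ^ 2) ^ (1/2 : ℝ)

/-- The `s`-decay norm of a bi-infinite matrix
`|A|_s := (Σ_h ⟨h⟩^{2s} (sup_{k-k'=h} |A_k^{k'}|)²)^{1/2}` (valued in `ℝ≥0∞`). -/
noncomputable def decayNorm {b : ℕ} (A : (Fin b → ℤ) → (Fin b → ℤ) → ℂ) (s : ℝ) : ℝ≥0∞ :=
  (∑' h : Fin b → ℤ, ENNReal.ofReal (wt h ^ (2 * s)) *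
      (⨆ k : Fin b → ℤ, (‖A k (k - h)‖₊ : ℝ≥0∞)) ^ 2) ^ (1/2 : ℝ)

/-- The identity matrix on `ℤᵇ`. -/
noncomputable def mId {b : ℕ} : (Fin b → ℤ) → (Fin b → ℤ) → ℂ :=
  fun k k' => if k = k' then 1 else 0

/-- `Ψ` is a two-sided inverse of `Φ`, with all the matrix products defined by
absolutely convergent sums. -/
def IsMatInverse {b : ℕ} (Φ Ψ : (Fin b → ℤ) → (Fin b → ℤ) → ℂ) : Prop :=
  (∀ k k' : Fin b → ℤ, Summable fun j : Fin b → ℤ => ‖Φ k j * Ψ j k'‖) ∧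
  (∀ k k' : Fin b → ℤ, Summable fun j : Fin b → ℤ => ‖Ψ k j * Φ j k'‖) ∧
  (∀ k k' : Fin b → ℤ, ∑' j : Fin b → ℤ, Φ k j * Ψ j k' = mId k k') ∧
  (∀ k k' : Fin b → ℤ, ∑' j : Fin b → ℤ, Ψ k j * Φ j k' = mId k k')

/-! Matrices whose diagonal suprema are summable form a Banach algebra, in which `1 + Ψ` is inverted
by its Neumann series; for `s > b/2` its norm is at most a multiple of the `s`-decay norm, by
Cauchy–Schwarz. Along the series the decay norms obey a tame estimate
`|AB|_s ≤ L |A|_s ‖B‖ + 2 ‖A‖ |B|_s`. Because the factor `2` does not depend on `s`, one smallness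
condition on `‖Ψ‖` makes the series converge geometrically in every decay norm at once. Differences
of inverses are then handled by `Φ₂⁻¹ - Φ₁⁻¹ = Φ₂⁻¹ (Φ₁ - Φ₂) Φ₁⁻¹`. -/

open scoped ENNReal NNReal Ring

section L2Norm

variable {ι κ G : Type*}

/-- The `ℓ²` norm of a family of extended nonnegative reals. -/
noncomputable def l2Norm (f : ι → ℝ≥0∞) : ℝ≥0∞ := (∑' i, f i ^ 2) ^ (1 / 2 : ℝ)

lemma l2Norm_sq (f : ι → ℝ≥0∞) : l2Norm f ^ 2 = ∑' i, f i ^ 2 := by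
  rw [l2Norm, ← ENNReal.rpow_natCast, ← ENNReal.rpow_mul]
  norm_num

lemma l2Norm_mono {f g : ι → ℝ≥0∞} (h : ∀ i, f i ≤ g i) : l2Norm f ≤ l2Norm g :=
  ENNReal.rpow_le_rpow (ENNReal.tsum_le_tsum fun i => pow_le_pow_left' (h i) 2) (by norm_num)

lemma l2Norm_const_mul (c : ℝ≥0∞) (f : ι → ℝ≥0∞) : l2Norm (fun i => c * f i) = c * l2Norm f := by
  rw [← (ENNReal.pow_right_strictMono two_ne_zero).injective.eq_iff]
  simp only [mul_pow, l2Norm_sq, ENNReal.tsum_mul_left]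

lemma l2Norm_comp_equiv (e : ι ≃ κ) (f : κ → ℝ≥0∞) : l2Norm (f ∘ e) = l2Norm f :=
  congrArg (· ^ (1 / 2 : ℝ)) (e.tsum_eq fun i => f i ^ 2)

lemma tsum_mul_le_l2Norm_mul_l2Norm (f g : ι → ℝ≥0∞) :
    ∑' i, f i * g i ≤ l2Norm f * l2Norm g := by
  rw [ENNReal.tsum_eq_iSup_sum]
  refine iSup_le fun s => ?_
  calc ∑ i ∈ s, f i * g i
      ≤ (∑ i ∈ s, f i ^ (2 : ℝ)) ^ (1 / 2 : ℝ) * (∑ i ∈ s, g i ^ (2 : ℝ)) ^ (1 / 2 : ℝ) :=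
        ENNReal.inner_le_Lp_mul_Lq s f g .two_two
    _ ≤ l2Norm f * l2Norm g := by
        simp only [ENNReal.rpow_two]
        unfold l2Norm
        gcongr <;> exact ENNReal.sum_le_tsum s

-- Minkowski: expand the square of the sum as a double sum and apply Cauchy-Schwarz termwise.
lemma l2Norm_tsum_le (f : κ → ι → ℝ≥0∞) :
    l2Norm (fun i => ∑' n, f n i) ≤ ∑' n, l2Norm (f n) := by
  rw [← ENNReal.pow_le_pow_left_iff two_ne_zero, l2Norm_sq]
  calc ∑' i, (∑' n, f n i) ^ 2
      = ∑' i, ∑' n, ∑' m, f n i * f m i := by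
        simp only [sq, ENNReal.tsum_mul_left, ENNReal.tsum_mul_right]
    _ = ∑' n, ∑' m, ∑' i, f n i * f m i := by
        rw [ENNReal.tsum_comm]
        exact tsum_congr fun n => ENNReal.tsum_comm
    _ ≤ ∑' n, ∑' m, l2Norm (f n) * l2Norm (f m) := by
        gcongr
        exact tsum_mul_le_l2Norm_mul_l2Norm _ _
    _ = (∑' n, l2Norm (f n)) ^ 2 := by
        simp only [sq, ENNReal.tsum_mul_left, ENNReal.tsum_mul_right]

lemma l2Norm_add_le (f g : ι → ℝ≥0∞) : l2Norm (fun i => f i + g i) ≤ l2Norm f + l2Norm g := by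
  simpa [tsum_fintype] using l2Norm_tsum_le fun b : Bool => if b then f else g

lemma l2Norm_single [DecidableEq ι] (i : ι) (c : ℝ≥0∞) : l2Norm (Pi.single i c) = c := by
  rw [← (ENNReal.pow_right_strictMono two_ne_zero).injective.eq_iff, l2Norm_sq, tsum_eq_single i]
  · rw [Pi.single_eq_same]
  · intro j hj
    simp [hj]

variable [AddCommGroup G]

lemma tsum_convolution_comm (f g : G → ℝ≥0∞) (h : G) :
    ∑' j, f j * g (h - j) = ∑' j, g j * f (h - j) := by
  rw [← (Equiv.subLeft h).tsum_eq]
  simp [mul_comm]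

lemma tsum_tsum_convolution (f g : G → ℝ≥0∞) :
    ∑' h, ∑' j, f j * g (h - j) = (∑' j, f j) * ∑' j, g j := by
  rw [ENNReal.tsum_comm, ← ENNReal.tsum_mul_right]
  refine tsum_congr fun j => ?_
  rw [ENNReal.tsum_mul_left]
  exact congrArg (f j * ·) ((Equiv.subRight j).tsum_eq g)

lemma l2Norm_convolution_le (f g : G → ℝ≥0∞) :
    l2Norm (fun h => ∑' j, f j * g (h - j)) ≤ (∑' j, f j) * l2Norm g := by
  calc l2Norm (fun h => ∑' j, f j * g (h - j))
      ≤ ∑' j, l2Norm (fun h => f j * g (h - j)) := l2Norm_tsum_le fun j h => f j * g (h - j)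
    _ = ∑' j, f j * l2Norm (g ∘ Equiv.subRight j) := tsum_congr fun j => l2Norm_const_mul _ _
    _ = (∑' j, f j) * l2Norm g := by simp only [l2Norm_comp_equiv, ENNReal.tsum_mul_right]

end L2Norm

section NormedRing

variable {R : Type*} [NormedRing R]

lemma enorm_mul_le_mul (x y : R) : ‖x * y‖ₑ ≤ ‖x‖ₑ * ‖y‖ₑ := by
  simp only [enorm_eq_nnnorm]
  exact mod_cast nnnorm_mul_le x y

lemma enorm_pow_le_pow [NormOneClass R] (x : R) (n : ℕ) : ‖x ^ n‖ₑ ≤ ‖x‖ₑ ^ n := by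
  simp only [enorm_eq_nnnorm]
  exact mod_cast nnnorm_pow_le x n

lemma norm_lt_one_of_enorm_le_half {x : R} (hx : ‖x‖ₑ ≤ 2⁻¹) : ‖x‖ < 1 := by
  rw [← ENNReal.toReal_one, ← toReal_enorm]
  exact ENNReal.toReal_strict_mono ENNReal.one_ne_top
    (hx.trans_lt (ENNReal.inv_lt_one.2 ENNReal.one_lt_two))

lemma isUnit_one_add_of_enorm_le_half [HasSummableGeomSeries R] {x : R} (hx : ‖x‖ₑ ≤ 2⁻¹) :
    IsUnit (1 + x) := by
  rw [← sub_neg_eq_add]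
  exact isUnit_one_sub_of_norm_lt_one (norm_lt_one_of_enorm_le_half ((enorm_neg x).trans_le hx))

lemma tsum_neg_pow_eq_inverse_one_add [HasSummableGeomSeries R] {x : R} (hx : ‖x‖ₑ ≤ 2⁻¹) :
    ∑' n, (-x) ^ n = (1 + x)⁻¹ʳ := by
  rw [geom_series_eq_inverse _ (norm_lt_one_of_enorm_le_half ((enorm_neg x).trans_le hx)),
    sub_neg_eq_add]

lemma tsum_neg_pow_succ_eq_inverse_one_add_sub_one [HasSummableGeomSeries R] {x : R}
    (hx : ‖x‖ₑ ≤ 2⁻¹) : ∑' n, (-x) ^ (n + 1) = (1 + x)⁻¹ʳ - 1 := by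
  rw [geom_series_succ _ (norm_lt_one_of_enorm_le_half ((enorm_neg x).trans_le hx)),
    tsum_neg_pow_eq_inverse_one_add hx]

lemma enorm_inverse_one_add_le [HasSummableGeomSeries R] [NormOneClass R] {x : R}
    (hx : ‖x‖ₑ ≤ 2⁻¹) : ‖(1 + x)⁻¹ʳ‖ₑ ≤ 2 := by
  rw [← tsum_neg_pow_eq_inverse_one_add hx]
  calc ‖∑' n, (-x) ^ n‖ₑ ≤ ∑' n, ‖(-x) ^ n‖ₑ := enorm_tsum_le_tsum_enorm
    _ ≤ ∑' n, 2⁻¹ ^ n := by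
        gcongr with n
        exact (enorm_pow_le_pow _ n).trans (pow_le_pow_left' ((enorm_neg x).trans_le hx) n)
    _ = 2 := ENNReal.tsum_geometric_two

end NormedRing

section Product

variable {ι R : Type*} [NormedRing R]

/-- The product of two infinite matrices. Entries whose series diverges take the junk value `0`. -/
noncomputable def tsumMul (A B : Matrix ι ι R) : Matrix ι ι R :=
  .of fun k k' => ∑' j, A k j * B j k'

lemma one_tsumMul [DecidableEq ι] (A : Matrix ι ι R) : tsumMul 1 A = A := by
  ext k k'
  refine (tsum_eq_single k fun j hj => ?_).trans ?_
  · rw [Matrix.one_apply_ne hj.symm, zero_mul]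
  · rw [Matrix.one_apply_eq, one_mul]

lemma tsumMul_one [DecidableEq ι] (A : Matrix ι ι R) : tsumMul A 1 = A := by
  ext k k'
  refine (tsum_eq_single k' fun j hj => ?_).trans ?_
  · rw [Matrix.one_apply_ne hj, mul_zero]
  · rw [Matrix.one_apply_eq, mul_one]

lemma zero_tsumMul (A : Matrix ι ι R) : tsumMul 0 A = 0 := by
  ext k k'
  simp [tsumMul]

lemma tsumMul_zero (A : Matrix ι ι R) : tsumMul A 0 = 0 := by
  ext k k'
  simp [tsumMul]

end Product

section Diagonals

variable {G E : Type*} [AddCommGroup G] [NormedAddCommGroup E]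

/-- The supremum `sup_{k - k' = h} ‖A_k^{k'}‖` of a matrix along the diagonal of index `h`. -/
noncomputable def diagSup (A : Matrix G G E) (h : G) : ℝ≥0∞ := ⨆ k, ‖A k (k - h)‖ₑ

/-- The `ℓ¹` norm of the diagonal suprema: the norm of the Baskakov–Gohberg–Sjöstrand algebra. -/
noncomputable def diagSum (A : Matrix G G E) : ℝ≥0∞ := ∑' h, diagSup A h

/-- The weighted `ℓ²` norm of the diagonal suprema: the `s`-decay norm, for a general weight `w` in
place of `⟨h⟩^s`. -/
noncomputable def weightedNorm (w : G → ℝ≥0∞) (A : Matrix G G E) : ℝ≥0∞ :=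
  l2Norm fun h => w h * diagSup A h

lemma enorm_apply_le_diagSup (A : Matrix G G E) (k k' : G) : ‖A k k'‖ₑ ≤ diagSup A (k - k') := by
  simpa [diagSup] using le_iSup (fun i => ‖A i (i - (k - k'))‖ₑ) k

lemma enorm_apply_le_diagSum (A : Matrix G G E) (k k' : G) : ‖A k k'‖ₑ ≤ diagSum A :=
  (enorm_apply_le_diagSup A k k').trans (ENNReal.le_tsum _)

lemma tsum_enorm_row_le_diagSum (A : Matrix G G E) (k : G) : ∑' j, ‖A k j‖ₑ ≤ diagSum A := by
  rw [diagSum, ← (Equiv.subLeft k).tsum_eq (diagSup A)]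
  exact ENNReal.tsum_le_tsum fun j => enorm_apply_le_diagSup A k j

lemma diagSup_neg (A : Matrix G G E) : diagSup (-A) = diagSup A := by
  ext h
  simp only [diagSup, Matrix.neg_apply, enorm_neg]

lemma diagSum_neg (A : Matrix G G E) : diagSum (-A) = diagSum A := by
  simp only [diagSum, diagSup_neg]

lemma weightedNorm_neg (w : G → ℝ≥0∞) (A : Matrix G G E) :
    weightedNorm w (-A) = weightedNorm w A := by
  simp only [weightedNorm, diagSup_neg]

lemma diagSup_add_le (A B : Matrix G G E) (h : G) :
    diagSup (A + B) h ≤ diagSup A h + diagSup B h :=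
  iSup_le fun k => (enorm_add_le _ _).trans <|
    add_le_add (le_iSup (fun k => ‖A k (k - h)‖ₑ) k) (le_iSup (fun k => ‖B k (k - h)‖ₑ) k)

lemma diagSum_add_le (A B : Matrix G G E) : diagSum (A + B) ≤ diagSum A + diagSum B := by
  rw [diagSum, diagSum, diagSum, ← ENNReal.tsum_add]
  exact ENNReal.tsum_le_tsum (diagSup_add_le A B)

lemma weightedNorm_add_le (w : G → ℝ≥0∞) (A B : Matrix G G E) :
    weightedNorm w (A + B) ≤ weightedNorm w A + weightedNorm w B := by
  refine (l2Norm_mono fun h => ?_).trans (l2Norm_add_le _ _)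
  rw [← mul_add]
  gcongr
  exact diagSup_add_le A B h

lemma diagSup_tsum_le {ι : Type*} (A : ι → Matrix G G E) (h : G) :
    diagSup (.of fun k k' => ∑' n, A n k k') h ≤ ∑' n, diagSup (A n) h :=
  iSup_le fun k => enorm_tsum_le_tsum_enorm.trans <|
    ENNReal.tsum_le_tsum fun n => le_iSup (fun k => ‖A n k (k - h)‖ₑ) k

lemma diagSum_tsum_le {ι : Type*} (A : ι → Matrix G G E) :
    diagSum (.of fun k k' => ∑' n, A n k k') ≤ ∑' n, diagSum (A n) := by
  unfold diagSum
  rw [ENNReal.tsum_comm]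
  exact ENNReal.tsum_le_tsum (diagSup_tsum_le A)

lemma weightedNorm_tsum_le {ι : Type*} (w : G → ℝ≥0∞) (A : ι → Matrix G G E) :
    weightedNorm w (.of fun k k' => ∑' n, A n k k') ≤ ∑' n, weightedNorm w (A n) := by
  refine (l2Norm_mono fun h => ?_).trans (l2Norm_tsum_le _)
  rw [ENNReal.tsum_mul_left]
  gcongr
  exact diagSup_tsum_le A h

lemma weightedNorm_mono {v w : G → ℝ≥0∞} (hvw : ∀ h, v h ≤ w h) (A : Matrix G G E) :
    weightedNorm v A ≤ weightedNorm w A :=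
  l2Norm_mono fun h => by gcongr; exact hvw h

lemma diagSum_le_l2Norm_mul_weightedNorm {v w : G → ℝ≥0∞} (hvw : ∀ h, v h * w h = 1)
    (A : Matrix G G E) : diagSum A ≤ l2Norm v * weightedNorm w A :=
  calc diagSum A
      = ∑' h, v h * (w h * diagSup A h) := by simp only [← mul_assoc, hvw, one_mul, diagSum]
    _ ≤ l2Norm v * weightedNorm w A := tsum_mul_le_l2Norm_mul_l2Norm _ _

variable {R : Type*} [NormedRing R]

lemma diagSup_one [DecidableEq G] [NormOneClass R] :
    diagSup (1 : Matrix G G R) = Pi.single 0 1 := by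
  ext h
  obtain rfl | hh := eq_or_ne h 0
  · have hdiag (k : G) : (1 : Matrix G G R) k (k - 0) = 1 := by rw [sub_zero, Matrix.one_apply_eq]
    simp only [diagSup, hdiag, enorm_one, ciSup_const, Pi.single_eq_same]
  · have hoff (k : G) : (1 : Matrix G G R) k (k - h) = 0 :=
      Matrix.one_apply_ne fun hk => hh (sub_eq_self.1 hk.symm)
    simp only [diagSup, hoff, enorm_zero, ciSup_const, Pi.single_eq_of_ne hh]

lemma diagSum_one [DecidableEq G] [NormOneClass R] : diagSum (1 : Matrix G G R) = 1 := by
  rw [diagSum, diagSup_one, tsum_pi_single]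

lemma weightedNorm_one [DecidableEq G] [NormOneClass R] (w : G → ℝ≥0∞) :
    weightedNorm w (1 : Matrix G G R) = w 0 := by
  have hsingle : (fun h => w h * diagSup (1 : Matrix G G R) h) = Pi.single 0 (w 0) := by
    ext h
    rw [diagSup_one, Pi.single_apply, Pi.single_apply]
    split_ifs with hh <;> simp [hh]
  rw [weightedNorm, hsingle, l2Norm_single]

lemma diagSup_tsumMul_le (A B : Matrix G G R) (h : G) :
    diagSup (tsumMul A B) h ≤ ∑' j, diagSup A j * diagSup B (h - j) := by
  refine iSup_le fun k => ?_
  calc ‖∑' j, A k j * B j (k - h)‖ₑ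
      ≤ ∑' j, ‖A k j * B j (k - h)‖ₑ := enorm_tsum_le_tsum_enorm
    _ = ∑' j, ‖A k (k - j) * B (k - j) (k - h)‖ₑ := ((Equiv.subLeft k).tsum_eq _).symm
    _ ≤ ∑' j, diagSup A j * diagSup B (h - j) := by
        gcongr with j
        refine (enorm_mul_le_mul _ _).trans (mul_le_mul' ?_ ?_)
        · simpa using enorm_apply_le_diagSup A k (k - j)
        · simpa using enorm_apply_le_diagSup B (k - j) (k - h)

lemma diagSum_tsumMul_le (A B : Matrix G G R) : diagSum (tsumMul A B) ≤ diagSum A * diagSum B :=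
  (ENNReal.tsum_le_tsum (diagSup_tsumMul_le A B)).trans_eq (tsum_tsum_convolution _ _)

-- Distributing `w h ≤ L * w j + c * w (h - j)` over the convolution of the diagonal suprema leaves
-- two convolutions of an `ℓ¹` family with a weighted `ℓ²` one.
lemma weightedNorm_tsumMul_le {w : G → ℝ≥0∞} {L c : ℝ≥0∞}
    (hw : ∀ h k, w (h + k) ≤ L * w h + c * w k) (A B : Matrix G G R) :
    weightedNorm w (tsumMul A B) ≤
      L * (weightedNorm w A * diagSum B) + c * (diagSum A * weightedNorm w B) := by
  let a (h : G) := w h * diagSup A h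
  let b (h : G) := w h * diagSup B h
  have pointwise (h : G) : w h * diagSup (tsumMul A B) h ≤
      L * ∑' j, diagSup B j * a (h - j) + c * ∑' j, diagSup A j * b (h - j) := by
    calc w h * diagSup (tsumMul A B) h
        ≤ w h * ∑' j, diagSup A j * diagSup B (h - j) := by
          gcongr
          exact diagSup_tsumMul_le A B h
      _ = ∑' j, w h * (diagSup A j * diagSup B (h - j)) := ENNReal.tsum_mul_left.symm
      _ ≤ ∑' j, (L * w j + c * w (h - j)) * (diagSup A j * diagSup B (h - j)) := by
          gcongr with j
          simpa using hw j (h - j)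
      _ = ∑' j, (L * (a j * diagSup B (h - j)) + c * (diagSup A j * b (h - j))) :=
          tsum_congr fun j => by ring
      _ = L * ∑' j, diagSup B j * a (h - j) + c * ∑' j, diagSup A j * b (h - j) := by
          rw [ENNReal.tsum_add, ENNReal.tsum_mul_left, ENNReal.tsum_mul_left,
            tsum_convolution_comm]
  refine (l2Norm_mono pointwise).trans ((l2Norm_add_le _ _).trans ?_)
  rw [l2Norm_const_mul, l2Norm_const_mul, mul_comm (weightedNorm w A)]
  gcongr
  · exact l2Norm_convolution_le (diagSup B) a
  · exact l2Norm_convolution_le (diagSup A) b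

end Diagonals

section Algebra

variable {G R : Type*} [AddCommGroup G] [NormedRing R]

lemma tsum_enorm_mul_le (A B : Matrix G G R) (k k' : G) :
    ∑' j, ‖A k j * B j k'‖ₑ ≤ diagSum A * diagSum B := by
  calc ∑' j, ‖A k j * B j k'‖ₑ
      ≤ ∑' j, ‖A k j‖ₑ * diagSum B := by
        gcongr with j
        exact (enorm_mul_le_mul _ _).trans (mul_le_mul' le_rfl (enorm_apply_le_diagSum B j k'))
    _ = (∑' j, ‖A k j‖ₑ) * diagSum B := ENNReal.tsum_mul_right
    _ ≤ diagSum A * diagSum B := by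
        gcongr
        exact tsum_enorm_row_le_diagSum A k

lemma tsum_tsum_enorm_mul_mul_le (A B C : Matrix G G R) (k k' : G) :
    ∑' i, ∑' j, ‖A k i * B i j * C j k'‖ₑ ≤ diagSum A * (diagSum B * diagSum C) := by
  calc ∑' i, ∑' j, ‖A k i * B i j * C j k'‖ₑ
      ≤ ∑' i, ∑' j, ‖A k i‖ₑ * ‖B i j * C j k'‖ₑ := by
        gcongr with i j
        rw [mul_assoc]
        exact enorm_mul_le_mul _ _
    _ ≤ ∑' i, ‖A k i‖ₑ * (diagSum B * diagSum C) := by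
        gcongr with i
        rw [ENNReal.tsum_mul_left]
        gcongr
        exact tsum_enorm_mul_le B C i k'
    _ = (∑' i, ‖A k i‖ₑ) * (diagSum B * diagSum C) := ENNReal.tsum_mul_right
    _ ≤ diagSum A * (diagSum B * diagSum C) := by
        gcongr
        exact tsum_enorm_row_le_diagSum A k

lemma summable_norm_mul {A B : Matrix G G R} (hA : diagSum A ≠ ⊤) (hB : diagSum B ≠ ⊤)
    (k k' : G) : Summable fun j => ‖A k j * B j k'‖ :=
  tsum_enorm_ne_top_iff_summable_norm.1 <|
    ne_top_of_le_ne_top (ENNReal.mul_ne_top hA hB) (tsum_enorm_mul_le A B k k')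

section Complete

variable [CompleteSpace R] {A B C : Matrix G G R}

lemma tsumMul_add (hA : diagSum A ≠ ⊤) (hB : diagSum B ≠ ⊤) (hC : diagSum C ≠ ⊤) :
    tsumMul A (B + C) = tsumMul A B + tsumMul A C := by
  ext k k'
  simp only [tsumMul, Matrix.of_apply, Matrix.add_apply, mul_add]
  exact (summable_norm_mul hA hB k k').of_norm.tsum_add (summable_norm_mul hA hC k k').of_norm

lemma add_tsumMul (hA : diagSum A ≠ ⊤) (hB : diagSum B ≠ ⊤) (hC : diagSum C ≠ ⊤) :
    tsumMul (A + B) C = tsumMul A C + tsumMul B C := by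
  ext k k'
  simp only [tsumMul, Matrix.of_apply, Matrix.add_apply, add_mul]
  exact (summable_norm_mul hA hC k k').of_norm.tsum_add (summable_norm_mul hB hC k k').of_norm

lemma tsumMul_assoc (hA : diagSum A ≠ ⊤) (hB : diagSum B ≠ ⊤) (hC : diagSum C ≠ ⊤) :
    tsumMul (tsumMul A B) C = tsumMul A (tsumMul B C) := by
  ext k k'
  have hsum : Summable (Function.uncurry fun i j => A k i * B i j * C j k') := by
    refine Summable.of_norm (tsum_enorm_ne_top_iff_summable_norm.1 ?_)
    rw [ENNReal.tsum_prod']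
    exact ne_top_of_le_ne_top (ENNReal.mul_ne_top hA (ENNReal.mul_ne_top hB hC))
      (tsum_tsum_enorm_mul_mul_le A B C k k')
  calc ∑' j, (∑' i, A k i * B i j) * C j k'
      = ∑' j, ∑' i, A k i * B i j * C j k' := tsum_congr fun j =>
        ((summable_norm_mul hA hB k j).of_norm.tsum_mul_right _).symm
    _ = ∑' i, ∑' j, A k i * B i j * C j k' := hsum.tsum_comm
    _ = ∑' i, A k i * ∑' j, B i j * C j k' := tsum_congr fun i => by
        simp only [mul_assoc]
        exact (summable_norm_mul hB hC i k').of_norm.tsum_mul_left _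

end Complete

variable (G R) in
/-- The additive group of matrices whose diagonal suprema are summable. -/
def diagSummableAddSubgroup : AddSubgroup (Matrix G G R) where
  carrier := {A | diagSum A ≠ ⊤}
  zero_mem' := by simp [diagSum, diagSup]
  add_mem' hA hB := ne_top_of_le_ne_top (ENNReal.add_ne_top.2 ⟨hA, hB⟩) (diagSum_add_le _ _)
  neg_mem' hA := (diagSum_neg _).trans_ne hA

variable (G R) in
/-- The Baskakov–Gohberg–Sjöstrand algebra: the matrices whose diagonal suprema are summable, with
the matrix product and the norm `diagSum`. It is a type synonym of the subgroup because the latter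
already carries the topology of entrywise convergence. -/
def DiagSummable : Type _ := diagSummableAddSubgroup G R

namespace DiagSummable

instance : AddCommGroup (DiagSummable G R) :=
  inferInstanceAs (AddCommGroup (diagSummableAddSubgroup G R))

/-- The underlying matrix of an element of the algebra. -/
def toMatrix : DiagSummable G R →+ Matrix G G R := (diagSummableAddSubgroup G R).subtype

lemma toMatrix_injective : Function.Injective (toMatrix : DiagSummable G R → Matrix G G R) :=
  Subtype.val_injective

lemma diagSum_ne_top (A : DiagSummable G R) : diagSum (toMatrix A) ≠ ⊤ := A.2

lemma exists_toMatrix_eq {A : Matrix G G R} (hA : diagSum A ≠ ⊤) :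
    ∃ A' : DiagSummable G R, toMatrix A' = A := ⟨⟨A, hA⟩, rfl⟩

lemma toMatrix_ext {A B : DiagSummable G R} (h : ∀ k k', toMatrix A k k' = toMatrix B k k') :
    A = B :=
  toMatrix_injective (Matrix.ext h)

noncomputable instance : Mul (DiagSummable G R) where
  mul A B := ⟨tsumMul (toMatrix A) (toMatrix B), ne_top_of_le_ne_top
    (ENNReal.mul_ne_top (diagSum_ne_top A) (diagSum_ne_top B)) (diagSum_tsumMul_le _ _)⟩

lemma toMatrix_mul (A B : DiagSummable G R) :
    toMatrix (A * B) = tsumMul (toMatrix A) (toMatrix B) := rfl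

variable [DecidableEq G] [NormOneClass R]

instance : One (DiagSummable G R) where
  one := ⟨1, diagSum_one.trans_ne ENNReal.one_ne_top⟩

lemma toMatrix_one : toMatrix (1 : DiagSummable G R) = 1 := rfl

variable [CompleteSpace R]

noncomputable instance : Ring (DiagSummable G R) where
  __ := (inferInstance : AddCommGroup (DiagSummable G R))
  left_distrib A B C := toMatrix_injective <|
    tsumMul_add (diagSum_ne_top A) (diagSum_ne_top B) (diagSum_ne_top C)
  right_distrib A B C := toMatrix_injective <|
    add_tsumMul (diagSum_ne_top A) (diagSum_ne_top B) (diagSum_ne_top C)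
  zero_mul A := toMatrix_injective (zero_tsumMul _)
  mul_zero A := toMatrix_injective (tsumMul_zero _)
  mul_assoc A B C := toMatrix_injective <|
    tsumMul_assoc (diagSum_ne_top A) (diagSum_ne_top B) (diagSum_ne_top C)
  one_mul A := toMatrix_injective (one_tsumMul _)
  mul_one A := toMatrix_injective (tsumMul_one _)

noncomputable instance : NormedRing (DiagSummable G R) :=
  RingNorm.toNormedRing
    { toFun := fun A => (diagSum (toMatrix A)).toReal
      map_zero' := by simp [diagSum, diagSup]
      add_le' := fun A B => by
        rw [← ENNReal.toReal_add (diagSum_ne_top A) (diagSum_ne_top B)]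
        exact ENNReal.toReal_mono
          (ENNReal.add_ne_top.2 ⟨diagSum_ne_top A, diagSum_ne_top B⟩) (diagSum_add_le _ _)
      neg' := fun A => by rw [map_neg, diagSum_neg]
      mul_le' := fun A B => by
        rw [← ENNReal.toReal_mul]
        exact ENNReal.toReal_mono
          (ENNReal.mul_ne_top (diagSum_ne_top A) (diagSum_ne_top B)) (diagSum_tsumMul_le _ _)
      eq_zero_of_map_eq_zero' := fun A hA => toMatrix_ext fun k k' => by
        have hzero : diagSum (toMatrix A) = 0 :=
          (ENNReal.toReal_eq_zero_iff _).1 hA |>.resolve_right (diagSum_ne_top A)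
        simpa [hzero] using enorm_apply_le_diagSum (toMatrix A) k k' }

lemma enorm_eq_diagSum (A : DiagSummable G R) : ‖A‖ₑ = diagSum (toMatrix A) := by
  rw [← ofReal_norm]
  exact ENNReal.ofReal_toReal (diagSum_ne_top A)

instance : NormOneClass (DiagSummable G R) where
  norm_one := congrArg ENNReal.toReal diagSum_one

lemma summable_apply {A : ℕ → DiagSummable G R} (hA : Summable fun n => ‖A n‖) (k k' : G) :
    Summable fun n => toMatrix (A n) k k' := by
  refine .of_norm (tsum_enorm_ne_top_iff_summable_norm.1 ?_)
  refine ne_top_of_le_ne_top (tsum_enorm_ne_top_iff_summable_norm.2 hA) ?_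
  gcongr with n
  exact (enorm_apply_le_diagSum _ k k').trans_eq (enorm_eq_diagSum (A n)).symm

lemma exists_tendsto_sum_range {A : ℕ → DiagSummable G R} (hA : Summable fun n => ‖A n‖) :
    ∃ S : DiagSummable G R, toMatrix S = .of (fun k k' => ∑' n, toMatrix (A n) k k') ∧
      Filter.Tendsto (fun N => ∑ n ∈ Finset.range N, A n) Filter.atTop (nhds S) := by
  have hfin : ∑' n, diagSum (toMatrix (A n)) ≠ ⊤ := by
    simpa only [enorm_eq_diagSum] using tsum_enorm_ne_top_iff_summable_norm.2 hA
  obtain ⟨S, hS⟩ := exists_toMatrix_eq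
    (ne_top_of_le_ne_top hfin (diagSum_tsum_le fun n => toMatrix (A n)))
  have hrest (N : ℕ) : toMatrix (S - ∑ n ∈ Finset.range N, A n) =
      .of fun k k' => ∑' n, toMatrix (A (n + N)) k k' := by
    ext k k'
    rw [map_sub, map_sum, hS, Matrix.sub_apply, Matrix.sum_apply]
    exact sub_eq_of_eq_add' ((summable_apply hA k k').sum_add_tsum_nat_add N).symm
  have hbound (N : ℕ) :
      ‖∑ n ∈ Finset.range N, A n - S‖ₑ ≤ ∑' n, diagSum (toMatrix (A (n + N))) := by
    rw [enorm_sub_rev, enorm_eq_diagSum, hrest]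
    exact diagSum_tsum_le _
  exact ⟨S, hS, tendsto_iff_enorm_sub_tendsto_zero.2 <|
    tendsto_of_tendsto_of_tendsto_of_le_of_le tendsto_const_nhds
      (ENNReal.tendsto_sum_nat_add _ hfin) (fun _ => zero_le) hbound⟩

instance : CompleteSpace (DiagSummable G R) :=
  NormedAddCommGroup.completeSpace_of_summable_imp_tendsto fun _ hA =>
    (exists_tendsto_sum_range hA).imp fun _ h => h.2

lemma toMatrix_tsum {A : ℕ → DiagSummable G R} (hA : Summable fun n => ‖A n‖) :
    toMatrix (∑' n, A n) = .of fun k k' => ∑' n, toMatrix (A n) k k' := by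
  obtain ⟨S, hS, hlim⟩ := exists_tendsto_sum_range hA
  rw [tendsto_nhds_unique hA.of_norm.hasSum.tendsto_sum_nat hlim, hS]

lemma weightedNorm_toMatrix_tsum_le (w : G → ℝ≥0∞) {A : ℕ → DiagSummable G R}
    (hA : Summable fun n => ‖A n‖) :
    weightedNorm w (toMatrix (∑' n, A n)) ≤ ∑' n, weightedNorm w (toMatrix (A n)) := by
  rw [toMatrix_tsum hA]
  exact weightedNorm_tsum_le w _

end DiagSummable

end Algebra

section Tame

variable {G R : Type*} [AddCommGroup G]

/-- Weights whose weighted norms obey a tame product estimate. The factor of the second summand is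
the same for every weight, so that one smallness condition on the unweighted norm makes the Neumann
series converge in all the weighted norms simultaneously. -/
structure IsTameWeight (L : ℝ≥0∞) (w : G → ℝ≥0∞) : Prop where
  two_le : 2 ≤ L
  add_le : ∀ h k, w (h + k) ≤ L * w h + 2 * w k

lemma le_of_four_mul_le {a c : ℝ≥0∞} (h : 4 * a ≤ c) : a ≤ c :=
  (le_mul_of_one_le_left zero_le (by norm_num)).trans h

namespace IsTameWeight

open DiagSummable

variable {L : ℝ≥0∞} {w : G → ℝ≥0∞} (hw : IsTameWeight L w)
include hw

lemma one_le_two_mul : 1 ≤ 2 * L :=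
  one_le_two.trans (hw.two_le.trans (le_mul_of_one_le_left zero_le one_le_two))

variable [NormedRing R] [CompleteSpace R] [NormOneClass R] [DecidableEq G]

lemma weightedNorm_mul_le (A B : DiagSummable G R) :
    weightedNorm w (toMatrix (A * B)) ≤
      L * (weightedNorm w (toMatrix A) * ‖B‖ₑ) + 2 * (‖A‖ₑ * weightedNorm w (toMatrix B)) := by
  rw [enorm_eq_diagSum, enorm_eq_diagSum]
  exact weightedNorm_tsumMul_le hw.add_le _ _

lemma weightedNorm_mul_mul_le (X D Y : DiagSummable G R) :
    weightedNorm w (toMatrix (X * D * Y)) ≤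
      L ^ 2 * (‖X‖ₑ * ‖Y‖ₑ * weightedNorm w (toMatrix D) +
        (weightedNorm w (toMatrix X) * ‖Y‖ₑ + ‖X‖ₑ * weightedNorm w (toMatrix Y)) * ‖D‖ₑ) := by
  calc weightedNorm w (toMatrix (X * D * Y))
      ≤ L * (weightedNorm w (toMatrix (X * D)) * ‖Y‖ₑ) +
          2 * (‖X * D‖ₑ * weightedNorm w (toMatrix Y)) := hw.weightedNorm_mul_le _ _
    _ ≤ L * ((L * (weightedNorm w (toMatrix X) * ‖D‖ₑ) +
          L * (‖X‖ₑ * weightedNorm w (toMatrix D))) * ‖Y‖ₑ) +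
          (L * L) * (‖X‖ₑ * ‖D‖ₑ * weightedNorm w (toMatrix Y)) := by
        have h2 := hw.two_le
        gcongr
        · exact (hw.weightedNorm_mul_le X D).trans (by gcongr)
        · exact h2.trans (le_mul_of_one_le_left zero_le (one_le_two.trans h2))
        · exact enorm_mul_le_mul X D
    _ = L ^ 2 * (‖X‖ₑ * ‖Y‖ₑ * weightedNorm w (toMatrix D) +
        (weightedNorm w (toMatrix X) * ‖Y‖ₑ + ‖X‖ₑ * weightedNorm w (toMatrix Y)) * ‖D‖ₑ) := by
        ring

lemma weightedNorm_pow_succ_le {A : DiagSummable G R} (hA : 4 * ‖A‖ₑ ≤ 2⁻¹) (n : ℕ) :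
    weightedNorm w (toMatrix (A ^ (n + 1))) ≤ 2 * L * weightedNorm w (toMatrix A) * 2⁻¹ ^ n := by
  induction n with
  | zero =>
    simpa using le_mul_of_one_le_left zero_le hw.one_le_two_mul
  | succ n ih =>
    calc weightedNorm w (toMatrix (A ^ (n + 2)))
        ≤ L * (weightedNorm w (toMatrix A) * ‖A ^ (n + 1)‖ₑ) +
            2 * (‖A‖ₑ * weightedNorm w (toMatrix (A ^ (n + 1)))) := by
          rw [pow_succ' A (n + 1)]
          exact hw.weightedNorm_mul_le _ _
      _ ≤ L * (weightedNorm w (toMatrix A) * 2⁻¹ ^ (n + 1)) +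
            2 * (‖A‖ₑ * (2 * L * weightedNorm w (toMatrix A) * 2⁻¹ ^ n)) := by
          gcongr
          exact (enorm_pow_le_pow A _).trans
            (pow_le_pow_left' (le_of_four_mul_le hA) _)
      _ = L * weightedNorm w (toMatrix A) * 2⁻¹ ^ n * (2⁻¹ + 4 * ‖A‖ₑ) := by ring
      _ ≤ L * weightedNorm w (toMatrix A) * 2⁻¹ ^ n * (2⁻¹ + 2⁻¹) := by gcongr
      _ = 2 * L * weightedNorm w (toMatrix A) * 2⁻¹ ^ (n + 1) := by ring

lemma weightedNorm_inverse_one_add_sub_one_le {A : DiagSummable G R} (hA : 4 * ‖A‖ₑ ≤ 2⁻¹) :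
    weightedNorm w (toMatrix ((1 + A)⁻¹ʳ - 1)) ≤ 4 * L * weightedNorm w (toMatrix A) := by
  have hhalf : ‖A‖ₑ ≤ 2⁻¹ := le_of_four_mul_le hA
  have hsum : Summable fun n => ‖(-A) ^ (n + 1)‖ :=
    (summable_norm_geometric_of_norm_lt_one ((norm_neg A).trans_lt
      (norm_lt_one_of_enorm_le_half hhalf))).comp_injective (add_left_injective 1)
  rw [← tsum_neg_pow_succ_eq_inverse_one_add_sub_one hhalf]
  calc weightedNorm w (toMatrix (∑' n, (-A) ^ (n + 1)))
      ≤ ∑' n, 2 * L * weightedNorm w (toMatrix (-A)) * 2⁻¹ ^ n :=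
        (weightedNorm_toMatrix_tsum_le w hsum).trans
          (ENNReal.tsum_le_tsum (hw.weightedNorm_pow_succ_le (by rwa [enorm_neg])))
    _ = 4 * L * weightedNorm w (toMatrix A) := by
        rw [ENNReal.tsum_mul_left, ENNReal.tsum_geometric_two, map_neg, weightedNorm_neg]
        ring

lemma weightedNorm_inverse_one_add_le {A : DiagSummable G R} (hA : 4 * ‖A‖ₑ ≤ 2⁻¹) :
    weightedNorm w (toMatrix (1 + A)⁻¹ʳ) ≤ w 0 + 4 * L * weightedNorm w (toMatrix A) := by
  calc weightedNorm w (toMatrix (1 + A)⁻¹ʳ)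
      = weightedNorm w (1 + toMatrix ((1 + A)⁻¹ʳ - 1)) := by
        rw [map_sub, toMatrix_one, add_sub_cancel]
    _ ≤ w 0 + 4 * L * weightedNorm w (toMatrix A) :=
        (weightedNorm_add_le w _ _).trans <| add_le_add (weightedNorm_one w).le
          (hw.weightedNorm_inverse_one_add_sub_one_le hA)

lemma weightedNorm_inverse_one_add_sub_le {A B : DiagSummable G R}
    (hA : 4 * ‖A‖ₑ ≤ 2⁻¹) (hB : 4 * ‖B‖ₑ ≤ 2⁻¹) :
    weightedNorm w (toMatrix ((1 + B)⁻¹ʳ - (1 + A)⁻¹ʳ)) ≤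
      4 * L ^ 2 * (weightedNorm w (toMatrix (B - A)) +
        (w 0 + 2 * L * (weightedNorm w (toMatrix A) + weightedNorm w (toMatrix B))) *
          ‖B - A‖ₑ) := by
  have hA' := le_of_four_mul_le hA
  have hB' := le_of_four_mul_le hB
  rw [Ring.inverse_sub_inverse (iff_of_true (isUnit_one_add_of_enorm_le_half hB')
    (isUnit_one_add_of_enorm_le_half hA')), add_sub_add_left_eq_sub]
  calc weightedNorm w (toMatrix ((1 + B)⁻¹ʳ * (A - B) * (1 + A)⁻¹ʳ))
      ≤ L ^ 2 * (2 * 2 * weightedNorm w (toMatrix (A - B)) +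
          ((w 0 + 4 * L * weightedNorm w (toMatrix B)) * 2 +
            2 * (w 0 + 4 * L * weightedNorm w (toMatrix A))) * ‖A - B‖ₑ) := by
        refine (hw.weightedNorm_mul_mul_le _ _ _).trans ?_
        gcongr
        · exact enorm_inverse_one_add_le hB'
        · exact enorm_inverse_one_add_le hA'
        · exact hw.weightedNorm_inverse_one_add_le hB
        · exact enorm_inverse_one_add_le hA'
        · exact enorm_inverse_one_add_le hB'
        · exact hw.weightedNorm_inverse_one_add_le hA
    _ = 4 * L ^ 2 * (weightedNorm w (toMatrix (B - A)) +
          (w 0 + 2 * L * (weightedNorm w (toMatrix A) + weightedNorm w (toMatrix B))) *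
            ‖B - A‖ₑ) := by
        rw [← neg_sub B A, map_neg, weightedNorm_neg, enorm_neg]
        ring

lemma weightedNorm_inverse_one_add_sub_le_of_le {v : G → ℝ≥0∞} {K : ℝ≥0∞} (hw₀ : w 0 = 1)
    (hvw : ∀ h, v h ≤ w h) (hK : ∀ A : Matrix G G R, diagSum A ≤ K * weightedNorm v A)
    {A B : DiagSummable G R} (hA : 4 * ‖A‖ₑ ≤ 2⁻¹) (hB : 4 * ‖B‖ₑ ≤ 2⁻¹) :
    weightedNorm w (toMatrix ((1 + B)⁻¹ʳ - (1 + A)⁻¹ʳ)) ≤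
      8 * L ^ 3 * (1 + K) * (weightedNorm w (toMatrix (B - A)) +
        (weightedNorm w (toMatrix A) + weightedNorm w (toMatrix B)) *
          weightedNorm v (toMatrix (B - A))) := by
  set a := weightedNorm w (toMatrix A) + weightedNorm w (toMatrix B)
  set d := weightedNorm w (toMatrix (B - A))
  set d₀ := weightedNorm v (toMatrix (B - A))
  have hL : 1 ≤ 2 * L := hw.one_le_two_mul
  have hd : ‖B - A‖ₑ ≤ K * d₀ := (enorm_eq_diagSum (B - A)).trans_le (hK _)
  have hd₀ : d₀ ≤ d := weightedNorm_mono hvw _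
  calc weightedNorm w (toMatrix ((1 + B)⁻¹ʳ - (1 + A)⁻¹ʳ))
      ≤ 4 * L ^ 2 * (d + (1 + 2 * L * a) * ‖B - A‖ₑ) := by
        rw [← hw₀]
        exact hw.weightedNorm_inverse_one_add_sub_le hA hB
    _ ≤ 4 * L ^ 2 * (d + (1 + 2 * L * a) * (K * d₀)) := by gcongr
    _ = 4 * L ^ 2 * (1 * d + K * d₀ + 2 * L * K * a * d₀) := by ring
    _ ≤ 4 * L ^ 2 * (2 * L * d + 2 * L * K * d + 2 * L * (1 + K) * a * d₀) := by
        gcongr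
        · exact le_mul_of_one_le_left zero_le hL
        · exact le_add_self
    _ = 8 * L ^ 3 * (1 + K) * (d + a * d₀) := by ring

end IsTameWeight

open DiagSummable in
lemma exists_toMatrix_eq_of_small [NormedRing R] [CompleteSpace R] [NormOneClass R] [DecidableEq G]
    {v : G → ℝ≥0∞} {K L : ℝ≥0∞} (hK : ∀ A : Matrix G G R, diagSum A ≤ K * weightedNorm v A)
    {Ψ : Matrix G G R} (hΨ : 4 * (K + L) * weightedNorm v Ψ ≤ 2⁻¹) :
    ∃ A : DiagSummable G R, toMatrix A = Ψ ∧ 4 * ‖A‖ₑ ≤ 2⁻¹ ∧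
      4 * L * weightedNorm v (toMatrix A) ≤ 1 := by
  have hsmall : 4 * diagSum Ψ ≤ 2⁻¹ :=
    calc 4 * diagSum Ψ ≤ 4 * (K * weightedNorm v Ψ) := by gcongr; exact hK Ψ
      _ ≤ 4 * ((K + L) * weightedNorm v Ψ) := by gcongr; exact le_self_add
      _ ≤ 2⁻¹ := by rwa [← mul_assoc]
  obtain ⟨A, rfl⟩ := exists_toMatrix_eq <|
    ne_top_of_le_ne_top (ENNReal.inv_ne_top.2 two_ne_zero) (le_of_four_mul_le hsmall)
  refine ⟨A, rfl, by rwa [enorm_eq_diagSum], ?_⟩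
  calc 4 * L * weightedNorm v (toMatrix A)
      ≤ 4 * (K + L) * weightedNorm v (toMatrix A) := by gcongr; exact le_add_self
    _ ≤ 1 := hΨ.trans (ENNReal.inv_le_one.2 one_le_two)

end Tame

section Rpow

lemma exists_add_rpow_le {s : ℝ} (hs : 0 < s) {c : ℝ≥0} (hc : 1 < c) :
    ∃ M : ℝ≥0, ∀ x y : ℝ≥0∞, (x + y) ^ s ≤ M * x ^ s + c * y ^ s := by
  obtain ⟨ε, hε, hεc⟩ : ∃ ε : ℝ≥0, 0 < ε ∧ (1 + ε) ^ s = c := by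
    have hroot : 1 < c ^ s⁻¹ := NNReal.one_lt_rpow hc (inv_pos.2 hs)
    exact ⟨c ^ s⁻¹ - 1, tsub_pos_of_lt hroot, by
      rw [add_tsub_cancel_of_le hroot.le, NNReal.rpow_inv_rpow hs.ne']⟩
  refine ⟨(ε⁻¹ + 1) ^ s, fun x y => ?_⟩
  rw [← hεc, ENNReal.coe_rpow_of_nonneg _ hs.le, ENNReal.coe_rpow_of_nonneg _ hs.le,
    ← ENNReal.mul_rpow_of_nonneg _ _ hs.le, ← ENNReal.mul_rpow_of_nonneg _ _ hs.le]
  obtain hxy | hxy := le_total x (ε * y)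
  · refine le_add_left (ENNReal.rpow_le_rpow ?_ hs.le)
    push_cast
    rw [add_mul, one_mul, add_comm]
    gcongr
  · have hyx : y ≤ ε⁻¹ * x := by
      rw [ENNReal.coe_inv hε.ne']
      exact (ENNReal.mul_le_iff_le_inv (by exact_mod_cast hε.ne') ENNReal.coe_ne_top).1 hxy
    refine le_add_right (ENNReal.rpow_le_rpow ?_ hs.le)
    push_cast [hε.ne']
    rw [add_mul, one_mul, add_comm]
    gcongr

lemma exists_isTameWeight_rpow {G : Type*} [AddCommGroup G] {v : G → ℝ≥0∞}
    (hv : ∀ h k, v (h + k) ≤ v h + v k) {s : ℝ} (hs : 0 < s) :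
    ∃ L : ℝ≥0, IsTameWeight L fun h => v h ^ s := by
  obtain ⟨M, hM⟩ := exists_add_rpow_le hs one_lt_two
  refine ⟨M + 2, by simp, fun h k => ?_⟩
  calc v (h + k) ^ s ≤ (v h + v k) ^ s := ENNReal.rpow_le_rpow (hv h k) hs.le
    _ ≤ M * v h ^ s + 2 * v k ^ s := hM _ _
    _ ≤ (M + 2 : ℝ≥0) * v h ^ s + 2 * v k ^ s := by gcongr; simp

end Rpow

section Sobolev

variable {b : ℕ}

lemma natCast_absIdx (h : Fin b → ℤ) : (absIdx h : ℝ) = ‖h‖ := by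
  rw [Pi.norm_def, absIdx, ← NNReal.coe_natCast, NNReal.coe_inj, Nat.cast_finsetSup]
  simp only [NNReal.natCast_natAbs]

lemma wt_eq_max_norm (h : Fin b → ℤ) : wt h = max 1 ‖h‖ := by rw [wt, natCast_absIdx]

lemma one_le_wt (h : Fin b → ℤ) : 1 ≤ wt h := le_max_left _ _

lemma wt_zero : wt (0 : Fin b → ℤ) = 1 := by rw [wt_eq_max_norm, norm_zero, max_eq_left zero_le_one]

lemma wt_add_le (h k : Fin b → ℤ) : wt (h + k) ≤ wt h + wt k := by
  rw [wt_eq_max_norm (h + k)]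
  refine max_le ?_ ((norm_add_le h k).trans ?_)
  · linarith [one_le_wt h, one_le_wt k]
  · rw [wt_eq_max_norm, wt_eq_max_norm]
    gcongr <;> exact le_max_right _ _

/-- The weight `⟨h⟩^s` of the `s`-decay norm. -/
noncomputable def sobolevWeight (s : ℝ) (h : Fin b → ℤ) : ℝ≥0∞ := ENNReal.ofReal (wt h) ^ s

lemma sobolevWeight_zero (s : ℝ) : sobolevWeight s (0 : Fin b → ℤ) = 1 := by
  rw [sobolevWeight, wt_zero, ENNReal.ofReal_one, ENNReal.one_rpow]

lemma sobolevWeight_mono {s t : ℝ} (hst : s ≤ t) (h : Fin b → ℤ) :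
    sobolevWeight s h ≤ sobolevWeight t h :=
  ENNReal.rpow_le_rpow_of_exponent_le (ENNReal.one_le_ofReal.2 (one_le_wt h)) hst

lemma sobolevWeight_neg_mul_sobolevWeight (s : ℝ) (h : Fin b → ℤ) :
    sobolevWeight (-s) h * sobolevWeight s h = 1 := by
  rw [sobolevWeight, sobolevWeight, ← ENNReal.rpow_add _ _ _ ENNReal.ofReal_ne_top, neg_add_cancel,
    ENNReal.rpow_zero]
  exact (ENNReal.ofReal_pos.2 (one_pos.trans_le (one_le_wt h))).ne'

lemma sobolevWeight_sq (s : ℝ) (h : Fin b → ℤ) :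
    sobolevWeight s h ^ 2 = ENNReal.ofReal (wt h ^ (2 * s)) := by
  rw [sobolevWeight, ← ENNReal.rpow_natCast, ← ENNReal.rpow_mul,
    ENNReal.ofReal_rpow_of_pos (one_pos.trans_le (one_le_wt h)), mul_comm, Nat.cast_ofNat]

lemma exists_isTameWeight_sobolevWeight {s : ℝ} (hs : 0 < s) :
    ∃ L : ℝ≥0, IsTameWeight L (sobolevWeight s : (Fin b → ℤ) → ℝ≥0∞) :=
  exists_isTameWeight_rpow (v := fun h => ENNReal.ofReal (wt h))
    (fun h k => (ENNReal.ofReal_le_ofReal (wt_add_le h k)).trans ENNReal.ofReal_add_le) hs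

lemma decayNorm_eq_weightedNorm (A : Matrix (Fin b → ℤ) (Fin b → ℤ) ℂ) (s : ℝ) :
    decayNorm A s = weightedNorm (sobolevWeight s) A := by
  simp only [weightedNorm, l2Norm, mul_pow, sobolevWeight_sq]
  rfl

lemma summable_norm_rpow_int {r : ℝ} (hr : r < -b) : Summable fun h : Fin b → ℤ => ‖h‖ ^ r := by
  let B := Pi.basisFun ℝ (Fin b)
  let e := (B.restrictScalars ℤ).equivFun
  have hrank : Module.finrank ℤ (Submodule.span ℤ (Set.range B)) = b := by
    rw [Module.finrank_eq_card_basis (B.restrictScalars ℤ), Fintype.card_fin]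
  have hsum := ZLattice.summable_norm_rpow (Submodule.span ℤ (Set.range B)) r (by rwa [hrank])
  refine (hsum.comp_injective e.symm.injective).congr fun h => ?_
  have happly (i : Fin b) : (e.symm h : Fin b → ℝ) i = h i := by
    simp [e, B, Module.Basis.equivFun_symm_apply, Pi.single_apply, Finset.sum_apply]
  have hnnnorm (i : Fin b) : ‖(e.symm h : Fin b → ℝ) i‖₊ = ‖h i‖₊ := by
    rw [happly]
    exact NNReal.eq (Int.norm_cast_real _)
  rw [Function.comp_apply, ← Submodule.norm_coe, Pi.norm_def, Pi.norm_def]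
  simp only [hnnnorm]

lemma summable_wt_rpow {r : ℝ} (hr : r < -b) : Summable fun h : Fin b → ℤ => wt h ^ r := by
  refine (summable_norm_rpow_int hr).congr_cofinite ?_
  filter_upwards [(Set.finite_singleton (0 : Fin b → ℤ)).compl_mem_cofinite] with h hh
  obtain ⟨i, hi⟩ := Function.ne_iff.1 hh
  have hone : 1 ≤ ‖h i‖ := by
    rw [Int.norm_eq_abs]
    exact_mod_cast Int.one_le_abs hi
  rw [wt_eq_max_norm, max_eq_right (hone.trans (norm_le_pi_norm h i))]

lemma exists_diagSum_le {s : ℝ} (hs : (b : ℝ) / 2 < s) :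
    ∃ K : ℝ≥0, ∀ A : Matrix (Fin b → ℤ) (Fin b → ℤ) ℂ,
      diagSum A ≤ K * weightedNorm (sobolevWeight s) A := by
  have hfin : l2Norm (sobolevWeight (-s) : (Fin b → ℤ) → ℝ≥0∞) ≠ ⊤ := by
    refine ENNReal.rpow_ne_top_of_nonneg (by norm_num) ?_
    simp only [sobolevWeight_sq]
    exact (summable_wt_rpow (by linarith)).tsum_ofReal_ne_top
  refine ⟨(l2Norm (sobolevWeight (-s) : (Fin b → ℤ) → ℝ≥0∞)).toNNReal, fun A => ?_⟩
  rw [ENNReal.coe_toNNReal hfin]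
  exact diagSum_le_l2Norm_mul_weightedNorm (sobolevWeight_neg_mul_sobolevWeight s) A

end Sobolev

section Inverse

open DiagSummable

variable {G R : Type*} [AddCommGroup G] [DecidableEq G] [NormedRing R] [NormOneClass R]
  [CompleteSpace R]

/-- The inverse of `1 + Ψ` in the Baskakov–Gohberg–Sjöstrand algebra. It takes the junk value `0`
when `Ψ` does not lie in the algebra or `1 + Ψ` is not invertible there. -/
noncomputable def inverseOneAdd : Matrix G G R → Matrix G G R :=
  Function.extend toMatrix (fun A : DiagSummable G R => toMatrix (1 + A)⁻¹ʳ) 0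

lemma inverseOneAdd_toMatrix (A : DiagSummable G R) :
    inverseOneAdd (toMatrix A) = toMatrix (1 + A)⁻¹ʳ :=
  toMatrix_injective.extend_apply _ _ A

lemma isMatInverse_of_tsumMul_eq_one {b : ℕ} {A B : Matrix (Fin b → ℤ) (Fin b → ℤ) ℂ}
    (hA : diagSum A ≠ ⊤) (hB : diagSum B ≠ ⊤) (hAB : tsumMul A B = 1) (hBA : tsumMul B A = 1) :
    IsMatInverse A B :=
  ⟨summable_norm_mul hA hB, summable_norm_mul hB hA, congrFun₂ hAB, congrFun₂ hBA⟩

lemma isMatInverse_inverseOneAdd {b : ℕ} {A : DiagSummable (Fin b → ℤ) ℂ} (hA : ‖A‖ₑ ≤ 2⁻¹) :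
    IsMatInverse (fun k k' => mId k k' + toMatrix A k k') (inverseOneAdd (toMatrix A)) := by
  have hunit : IsUnit (1 + A) := isUnit_one_add_of_enorm_le_half hA
  have hinv : IsMatInverse (toMatrix (1 + A)) (toMatrix (1 + A)⁻¹ʳ) :=
    isMatInverse_of_tsumMul_eq_one (diagSum_ne_top _) (diagSum_ne_top _)
      (by rw [← toMatrix_mul, Ring.mul_inverse_cancel _ hunit, toMatrix_one])
      (by rw [← toMatrix_mul, Ring.inverse_mul_cancel _ hunit, toMatrix_one])
  rwa [map_add, toMatrix_one, ← inverseOneAdd_toMatrix] at hinv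

variable {b : ℕ} {s s₀ : ℝ} {K L : ℝ≥0∞} {A B : DiagSummable (Fin b → ℤ) ℂ}

lemma decayNorm_inverseOneAdd_sub_mId_le (hw : IsTameWeight L (sobolevWeight (b := b) s))
    (hA : 4 * ‖A‖ₑ ≤ 2⁻¹) :
    decayNorm (fun k k' => inverseOneAdd (toMatrix A) k k' - mId k k') s ≤
      4 * L * decayNorm (toMatrix A) s := by
  have hsub := hw.weightedNorm_inverse_one_add_sub_one_le hA
  rwa [← decayNorm_eq_weightedNorm, ← decayNorm_eq_weightedNorm, map_sub, toMatrix_one,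
    ← inverseOneAdd_toMatrix] at hsub

lemma decayNorm_inverseOneAdd_le_two (hw : IsTameWeight L (sobolevWeight (b := b) s))
    (hA : 4 * ‖A‖ₑ ≤ 2⁻¹) (hsmall : 4 * L * weightedNorm (sobolevWeight s) (toMatrix A) ≤ 1) :
    decayNorm (inverseOneAdd (toMatrix A)) s ≤ 2 := by
  rw [inverseOneAdd_toMatrix]
  calc decayNorm (toMatrix (1 + A)⁻¹ʳ) s
      = weightedNorm (sobolevWeight s) (toMatrix (1 + A)⁻¹ʳ) := decayNorm_eq_weightedNorm _ s
    _ ≤ sobolevWeight s (0 : Fin b → ℤ) + 4 * L * weightedNorm (sobolevWeight s) (toMatrix A) :=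
        hw.weightedNorm_inverse_one_add_le hA
    _ ≤ 1 + 1 := by rw [sobolevWeight_zero]; gcongr
    _ = 2 := one_add_one_eq_two

lemma decayNorm_inverseOneAdd_sub_le (hs : s₀ ≤ s)
    (hw : IsTameWeight L (sobolevWeight (b := b) s))
    (hK : ∀ A : Matrix (Fin b → ℤ) (Fin b → ℤ) ℂ,
      diagSum A ≤ K * weightedNorm (sobolevWeight s₀) A)
    (hA : 4 * ‖A‖ₑ ≤ 2⁻¹) (hB : 4 * ‖B‖ₑ ≤ 2⁻¹) :
    decayNorm (fun k k' => inverseOneAdd (toMatrix B) k k' - inverseOneAdd (toMatrix A) k k') s ≤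
      8 * L ^ 3 * (1 + K) * (decayNorm (fun k k' => toMatrix B k k' - toMatrix A k k') s +
        (decayNorm (toMatrix A) s + decayNorm (toMatrix B) s) *
          decayNorm (fun k k' => toMatrix B k k' - toMatrix A k k') s₀) := by
  have hsub := hw.weightedNorm_inverse_one_add_sub_le_of_le (sobolevWeight_zero s)
    (sobolevWeight_mono hs) hK hA hB
  simp only [← decayNorm_eq_weightedNorm, map_sub, ← inverseOneAdd_toMatrix] at hsub
  exact hsub

end Inverse

theorem stmt7 (b : ℕ) (hb : 1 ≤ b) (s₀ : ℝ) (hs₀ : (b : ℝ) / 2 < s₀) :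
    ∃ C₀ : ℝ, 1 ≤ C₀ ∧ ∃ C : ℝ → ℝ, (∀ s, s₀ ≤ s → 0 < C s) ∧
      ∃ inv : ((Fin b → ℤ) → (Fin b → ℤ) → ℂ) → ((Fin b → ℤ) → (Fin b → ℤ) → ℂ),
        (∀ Ψ : (Fin b → ℤ) → (Fin b → ℤ) → ℂ,
          ENNReal.ofReal C₀ * decayNorm Ψ s₀ ≤ 1 / 2 →
          IsMatInverse (fun k k' => mId k k' + Ψ k k') (inv Ψ) ∧
          decayNorm (inv Ψ) s₀ ≤ 2 ∧
          ∀ s, s₀ ≤ s → decayNorm Ψ s < ⊤ →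
            decayNorm (fun k k' => inv Ψ k k' - mId k k') s ≤
              ENNReal.ofReal (C s) * decayNorm Ψ s) ∧
        (∀ Ψ₁ Ψ₂ : (Fin b → ℤ) → (Fin b → ℤ) → ℂ,
          ENNReal.ofReal C₀ * decayNorm Ψ₁ s₀ ≤ 1 / 2 →
          ENNReal.ofReal C₀ * decayNorm Ψ₂ s₀ ≤ 1 / 2 →
          ∀ s, s₀ ≤ s → decayNorm Ψ₁ s < ⊤ → decayNorm Ψ₂ s < ⊤ →
            decayNorm (fun k k' => inv Ψ₂ k k' - inv Ψ₁ k k') s ≤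
              ENNReal.ofReal (C s) *
                (decayNorm (fun k k' => Ψ₂ k k' - Ψ₁ k k') s +
                  (decayNorm Ψ₁ s + decayNorm Ψ₂ s) *
                    decayNorm (fun k k' => Ψ₂ k k' - Ψ₁ k k') s₀)) := by
  obtain ⟨K, hK⟩ := exists_diagSum_le hs₀
  have hpos : 0 < s₀ := lt_of_le_of_lt (by positivity) hs₀
  choose! L hL using fun s (hs : 0 < s) => exists_isTameWeight_sobolevWeight (b := b) hs
  have htame (s : ℝ) (hs : s₀ ≤ s) := hL s (hpos.trans_le hs)
  have htwo (s : ℝ) (hs : s₀ ≤ s) : 2 ≤ L s := mod_cast (htame s hs).two_le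
  let C₀ : ℝ≥0 := 4 * (K + L s₀)
  let C (s : ℝ) : ℝ≥0 := 4 * L s + 8 * L s ^ 3 * (1 + K)
  have hC₀ : 1 ≤ C₀ := one_le_mul (by norm_num) (le_add_left (one_le_two.trans (htwo s₀ le_rfl)))
  have hC (s : ℝ) (hs : s₀ ≤ s) : 0 < C s := by have := two_pos.trans_le (htwo s hs); positivity
  have hsmall (Ψ) (hΨ : ENNReal.ofReal C₀ * decayNorm Ψ s₀ ≤ 1 / 2) :=
    exists_toMatrix_eq_of_small (L := L s₀) (Ψ := Ψ) hK <| by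
      rw [ENNReal.ofReal_coe_nnreal, one_div, decayNorm_eq_weightedNorm Ψ] at hΨ
      exact_mod_cast hΨ
  refine ⟨C₀, hC₀, fun s => C s, hC, inverseOneAdd, fun Ψ hΨ => ?_,
    fun Ψ₁ Ψ₂ hΨ₁ hΨ₂ s hs _ _ => ?_⟩ <;> simp only [ENNReal.ofReal_coe_nnreal]
  · obtain ⟨A, rfl, hA, hA₀⟩ := hsmall Ψ hΨ
    exact ⟨isMatInverse_inverseOneAdd (le_of_four_mul_le hA),
      decayNorm_inverseOneAdd_le_two (htame s₀ le_rfl) hA hA₀, fun s hs _ =>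
      (decayNorm_inverseOneAdd_sub_mId_le (htame s hs) hA).trans (by gcongr; simp [C])⟩
  · obtain ⟨A, rfl, hA, -⟩ := hsmall Ψ₁ hΨ₁
    obtain ⟨B, rfl, hB, -⟩ := hsmall Ψ₂ hΨ₂
    exact (decayNorm_inverseOneAdd_sub_le hs (htame s hs) hK hA hB).trans (by gcongr; simp [C])
end

section
/- Let d ≥ 1 and let p : ℝᵈ → ℝᵈ be 2π-periodic in each variable and Lipschitz (with respect to the sup-norm on ℝᵈ) with Lipschitz constant L ≤ 1/2. Then the map f(x) := x + p(x) is a bijection of ℝᵈ, its inverse has the form f^{−1}(y) = y + q(y) where q : ℝᵈ → ℝᵈ is 2π-periodic in each variable and Lipschitz, and one has sup_{y} |q(y)| = sup_{x} |p(x)| and the Lipschitz constant of q is at most 2L. -/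
/-!
Write `f x = x + p x` with `p` Lipschitz of constant `L < 1`. The triangle inequality gives
`(1 - L) * ‖x - x'‖ ≤ ‖f x - f x'‖`, so `f` is injective; it is surjective because a preimage of
`y` is a fixed point of the contraction `x ↦ y - p x`. If `y ↦ y + q y` inverts `f`, then
`q y = -p (y + q y)`: thus `q` is `-p` composed with a bijection of Lipschitz constant
`(1 - L)⁻¹`, which bounds its Lipschitz constant by `L / (1 - L)` and makes the values of `‖q‖`
the same as those of `‖p‖`. A translation leaving `p` invariant commutes with `f`, hence with
its inverse.
-/

open Function Set
open scoped NNReal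

section RightInverse

variable {E : Type*} {p q : E → E}

lemma exists_rightInverse_id_add [AddCommGroup E] (hsurj : Surjective fun x => x + p x) :
    ∃ q : E → E, RightInverse (fun y => y + q y) fun x => x + p x := by
  obtain ⟨g, hg⟩ := hsurj.hasRightInverse
  exact ⟨fun y => g y - y, by simpa only [add_sub_cancel] using hg⟩

lemma eq_neg_comp_of_rightInverse_id_add [AddCommGroup E]
    (hq : RightInverse (fun y => y + q y) fun x => x + p x) :
    q = fun y => -p (y + q y) := by
  funext y
  have hy : y + (q y + p (y + q y)) = y := by simpa only [add_assoc] using hq y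
  exact eq_neg_of_add_eq_zero_left (add_eq_left.mp hy)

lemma periodic_of_rightInverse_id_add [AddCommGroup E] {c : E}
    (hq : RightInverse (fun y => y + q y) fun x => x + p x)
    (hinj : Injective fun x => x + p x) (hp : Periodic p c) : Periodic q c := by
  intro y
  have heq : y + c + q (y + c) = y + q y + c := hinj <| calc
    y + c + q (y + c) + p (y + c + q (y + c)) = y + c := hq (y + c)
    _ = y + q y + p (y + q y) + c := congrArg (· + c) (hq y).symm
    _ = y + q y + c + p (y + q y + c) := by rw [hp, add_right_comm]
  exact add_left_cancel (heq.trans (add_right_comm y (q y) c))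

lemma range_norm_eq_of_rightInverse_id_add [SeminormedAddCommGroup E]
    (hq : RightInverse (fun y => y + q y) fun x => x + p x)
    (hinj : Injective fun x => x + p x) :
    range (fun y => ‖q y‖) = range fun x => ‖p x‖ := by
  have hsurj : Surjective fun y => y + q y :=
    (LeftInverse.rightInverse_of_injective hq hinj).surjective
  have hnorm : (fun y => ‖q y‖) = (fun x => ‖p x‖) ∘ fun y => y + q y := by
    funext y
    rw [congrFun (eq_neg_comp_of_rightInverse_id_add hq) y, norm_neg]
    rfl
  rw [hnorm, hsurj.range_comp]

end RightInverse

section Lipschitz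

variable {E : Type*} {p q : E → E} {L : ℝ≥0}

lemma antilipschitzWith_id_add [SeminormedAddCommGroup E] (hp : LipschitzWith L p) (hL : L < 1) :
    AntilipschitzWith (1 - L)⁻¹ fun x => x + p x := by
  simpa only [inv_one, id] using AntilipschitzWith.id.add_lipschitzWith hp (by rwa [inv_one])

lemma surjective_id_add [NormedAddCommGroup E] [CompleteSpace E] (hp : LipschitzWith L p)
    (hL : L < 1) : Surjective fun x => x + p x := by
  intro y
  have hcontr : ContractingWith L fun x => y - p x :=
    ⟨hL, .of_dist_le_mul fun a b => by simpa only [dist_sub_left] using hp.dist_le_mul a b⟩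
  have hfix : y - p (hcontr.fixedPoint _) = hcontr.fixedPoint _ := hcontr.fixedPoint_isFixedPt
  exact ⟨hcontr.fixedPoint _, (sub_eq_iff_eq_add.mp hfix).symm⟩

lemma bijective_id_add [NormedAddCommGroup E] [CompleteSpace E] (hp : LipschitzWith L p)
    (hL : L < 1) : Bijective fun x => x + p x :=
  ⟨(antilipschitzWith_id_add hp hL).injective, surjective_id_add hp hL⟩

lemma lipschitzWith_of_rightInverse_id_add [SeminormedAddCommGroup E]
    (hq : RightInverse (fun y => y + q y) fun x => x + p x)
    (hp : LipschitzWith L p) (hL : L < 1) : LipschitzWith (L / (1 - L)) q := by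
  rw [eq_neg_comp_of_rightInverse_id_add hq, div_eq_mul_inv]
  exact (hp.comp ((antilipschitzWith_id_add hp hL).to_rightInverse hq)).neg

end Lipschitz

lemma div_one_sub_le_two_mul {L : ℝ≥0} (hL : L ≤ 1 / 2) : L / (1 - L) ≤ 2 * L := by
  have hhalf : 1 / 2 ≤ 1 - L := by
    rw [le_tsub_iff_right (hL.trans (half_le_self zero_le_one))]
    exact (add_le_add_right hL _).trans_eq (add_halves 1)
  refine div_le_of_le_mul₀ zero_le zero_le ?_
  calc L = 2 * L * (1 / 2) := by field
    _ ≤ 2 * L * (1 - L) := by gcongr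

-- Ranges instead of suprema: `p` may be unbounded, and then `⨆ x, ‖p x‖` is the junk value `0`.
theorem stmt13_general {E : Type*} [NormedAddCommGroup E] [CompleteSpace E] {p : E → E} {L : ℝ≥0}
    (hp : LipschitzWith L p) (hL : L < 1) :
    Bijective (fun x => x + p x) ∧
    ∃ q : E → E,
      (∀ c, Periodic p c → Periodic q c) ∧
      LipschitzWith (L / (1 - L)) q ∧
      RightInverse (fun y => y + q y) (fun x => x + p x) ∧
      range (fun y => ‖q y‖) = range fun x => ‖p x‖ := by
  have hbij := bijective_id_add hp hL
  obtain ⟨q, hq⟩ := exists_rightInverse_id_add hbij.surjective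
  exact ⟨hbij, q, fun _ => periodic_of_rightInverse_id_add hq hbij.injective,
    lipschitzWith_of_rightInverse_id_add hq hp hL, hq,
    range_norm_eq_of_rightInverse_id_add hq hbij.injective⟩

theorem stmt13 (d : ℕ) (hd : 1 ≤ d) (p : (Fin d → ℝ) → (Fin d → ℝ)) (L : NNReal)
    (hLip : LipschitzWith L p) (hL : (L : ℝ) ≤ 1 / 2)
    (hper : ∀ (x : Fin d → ℝ) (k : Fin d → ℤ),
      p (x + fun i => 2 * Real.pi * (k i : ℝ)) = p x) :
    Function.Bijective (fun x => x + p x) ∧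
    ∃ q : (Fin d → ℝ) → (Fin d → ℝ),
      (∀ (y : Fin d → ℝ) (k : Fin d → ℤ),
        q (y + fun i => 2 * Real.pi * (k i : ℝ)) = q y) ∧
      LipschitzWith (2 * L) q ∧
      (∀ y : Fin d → ℝ, (fun x => x + p x) (y + q y) = y) ∧
      (⨆ y : Fin d → ℝ, ‖q y‖) = ⨆ x : Fin d → ℝ, ‖p x‖ := by
  have hL' : L ≤ 1 / 2 := by exact_mod_cast hL
  obtain ⟨hbij, q, hqper, hqLip, hq, hrange⟩ :=
    stmt13_general hLip (hL'.trans_lt (half_lt_self one_pos))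
  exact ⟨hbij, q, fun y k => hqper _ (hper · k) y, hqLip.weaken (div_one_sub_le_two_mul hL'), hq,
    congrArg sSup hrange⟩
end
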